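/- (Exchange-of-integration identity underlying the approximate inversion) Suppose Assumption A holds and u ∈ C[0,T] ∩ C¹(0,T] with |u'(t)| ≤ Q·t^{α(0)-1} on (0,T]. Then for every t ∈ (0,T], (1/Γ(α(t)))·∫₀^t (t-y)^{α(t)-1}·[∫₀^y u'(s)/(Γ(1-α(s))·(y-s)^{α(s)}) ds] dy = ∫₀^t K(t,s)·u'(s) ds, where K(t,s) := (t-s)^{α(t)-α(s)}/Γ(1+α(t)-α(s)). That is, applying the operator ₀Ĩ_t^{α(t)} g(t) := (1/Γ(α(t)))∫₀^t g(y)(t-y)^{α(t)-1} dy to ₀D_t^{α(t)} u yields ∫₀^t K(t,s) u'(s) ds. -/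

import Mathlib

/-!
The identity is Fubini's theorem on the triangle `0 < s < y < t`. For fixed `s` the inner integral
in `y` is a shifted Beta integral,
`∫ₛᵗ (t - y)^(a-1) (y - s)^(-b) dy = (t - s)^(a-b) Γ(a) Γ(1-b) / Γ(1+a-b)` with `a = α t`,
`b = α s` (`integral_beta_shifted`); the factors `Γ(a)` and `Γ(1 - α s)` cancel against the
normalizations and leave the kernel `K(t,s)`.

Absolute integrability on the triangle (`integrable_exchangeKernel`) is checked by integrating the
absolute value in `y` first. The result is `Γ(a) (t - s)^(a - α s) / Γ(1 + a - α s) * |u' s|`.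
Since `0 < α s < 1`, one has `(t - s)^(a - α s) ≤ max 1 t * (t - s)^(a-1)`, and `1/Γ` is bounded on
`[a, 1 + a]`, so this is at most a constant times the Beta integrand
`s^(α 0 - 1) (t - s)^(a - 1)`, which is integrable because `α 0 > 0`. The value `α 0 = 1` is
allowed, as only the exponents `α 0 - 1` and `a - 1` enter the majorant.
-/

open MeasureTheory Set

/-- Assumption A of the paper: `α ∈ C²[0,T]` with `0 < α* ≤ α(t) < 1` on `(0,T]`,
and `f` twice differentiable with first- and second-order derivatives bounded by `L`. -/
structure AssumptionA (T : ℝ) (α : ℝ → ℝ) (f : ℝ → ℝ → ℝ) (αstar L : ℝ) : Prop where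
  hT : 0 < T
  hα_smooth : ContDiffOn ℝ 2 α (Set.Icc 0 T)
  hαstar_pos : 0 < αstar
  hαstar_lt_one : αstar < 1
  hα_lb : ∀ t ∈ Set.Ioc 0 T, αstar ≤ α t
  hα_ub : ∀ t ∈ Set.Ioc 0 T, α t < 1
  hL_pos : 0 < L
  hf_smooth : ContDiff ℝ 2 (Function.uncurry f)
  hf_bd1 : ∀ p : ℝ × ℝ, p.2 ∈ Set.Icc 0 T → ‖fderiv ℝ (Function.uncurry f) p‖ ≤ L
  hf_bd2 : ∀ p : ℝ × ℝ, p.2 ∈ Set.Icc 0 T → ‖fderiv ℝ (fderiv ℝ (Function.uncurry f)) p‖ ≤ L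


lemma integral_beta_scaled {p q c : ℝ} (hp : 0 < p) (hq : 0 < q) (hc : 0 < c) :
    ∫ x in (0:ℝ)..c, x ^ (p - 1) * (c - x) ^ (q - 1)
      = c ^ (p + q - 1) * (Real.Gamma p * Real.Gamma q / Real.Gamma (p + q)) := by
  have h := Complex.betaIntegral_scaled (p : ℂ) (q : ℂ) hc
  rw [Complex.betaIntegral_eq_Gamma_mul_div _ _ (by simpa using hp) (by simpa using hq)] at h
  have h2 : (∫ x in (0:ℝ)..c, (x : ℂ) ^ ((p : ℂ) - 1) * ((c : ℂ) - x) ^ ((q : ℂ) - 1))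
      = ((∫ x in (0:ℝ)..c, x ^ (p - 1) * (c - x) ^ (q - 1) : ℝ) : ℂ) := by
    rw [← intervalIntegral.integral_ofReal]
    apply intervalIntegral.integral_congr
    intro x hx
    rw [uIcc_of_le hc.le] at hx
    simp only
    rw [Complex.ofReal_mul, Complex.ofReal_cpow hx.1, Complex.ofReal_cpow (by linarith [hx.2])]
    push_cast
    rfl
  rw [h2] at h
  apply Complex.ofReal_injective
  rw [h, Complex.ofReal_mul, Complex.ofReal_cpow hc.le]
  push_cast [← Complex.Gamma_ofReal]
  rfl

lemma integral_beta_shifted {a b s t : ℝ} (ha : 0 < a) (hb : b < 1) (hst : s < t) :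
    ∫ y in s..t, (t - y) ^ (a - 1) * (y - s) ^ (-b)
      = (t - s) ^ (a - b) * (Real.Gamma a * Real.Gamma (1 - b) / Real.Gamma (1 + a - b)) := by
  have h := integral_beta_scaled (p := 1 - b) (q := a) (c := t - s) (by linarith) ha (by linarith)
  have h2 := intervalIntegral.integral_comp_sub_right (a := s) (b := t)
    (fun x => x ^ (1 - b - 1) * (t - s - x) ^ (a - 1)) s
  rw [sub_self, h] at h2
  rw [show a - b = 1 - b + a - 1 by ring, show 1 + a - b = 1 - b + a by ring,
    mul_comm (Real.Gamma a), ← h2]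
  refine intervalIntegral.integral_congr fun y _ => ?_
  rw [mul_comm]
  congr 2 <;> ring

/-- The Beta integrand is integrable because its integral is nonzero, whereas the integral of a
non-integrable function is `0` by convention. -/
lemma integrableOn_beta_scaled {p q c : ℝ} (hp : 0 < p) (hq : 0 < q) (hc : 0 < c) :
    IntegrableOn (fun x => x ^ (p - 1) * (c - x) ^ (q - 1)) (Ioo 0 c) := by
  have h := integral_beta_scaled hp hq hc
  rw [← intervalIntegrable_iff_integrableOn_Ioo_of_le hc.le]
  by_contra hn
  rw [intervalIntegral.integral_undef hn] at h
  have : 0 < c ^ (p + q - 1) * (Real.Gamma p * Real.Gamma q / Real.Gamma (p + q)) := by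
    have := Real.Gamma_pos_of_pos hp
    have := Real.Gamma_pos_of_pos hq
    have := Real.Gamma_pos_of_pos (add_pos hp hq)
    positivity
  linarith

lemma integrableOn_beta_shifted {a b s t : ℝ} (ha : 0 < a) (hb : b < 1) (hst : s < t) :
    IntegrableOn (fun y => (t - y) ^ (a - 1) * (y - s) ^ (-b)) (Ioo s t) := by
  have h := integral_beta_shifted ha hb hst
  rw [← intervalIntegrable_iff_integrableOn_Ioo_of_le hst.le]
  by_contra hn
  rw [intervalIntegral.integral_undef hn] at h
  have : 0 < (t - s) ^ (a - b) *
      (Real.Gamma a * Real.Gamma (1 - b) / Real.Gamma (1 + a - b)) := by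
    have := Real.Gamma_pos_of_pos ha
    have := Real.Gamma_pos_of_pos (sub_pos.2 hb)
    have := Real.Gamma_pos_of_pos (show 0 < 1 + a - b by linarith)
    have := sub_pos.2 hst
    positivity
  linarith

lemma continuousOn_Gamma_comp {X : Type*} [TopologicalSpace X] {g : X → ℝ} {S : Set X}
    (hg : ContinuousOn g S) (hpos : ∀ x ∈ S, 0 < g x) :
    ContinuousOn (fun x => Real.Gamma (g x)) S := by
  intro x hx
  refine ContinuousAt.comp_continuousWithinAt (g := Real.Gamma) ?_ (hg x hx)
  refine (Real.differentiableAt_Gamma fun m => ?_).continuousAt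
  have := hpos x hx
  have : (0 : ℝ) ≤ m := m.cast_nonneg
  linarith

lemma exists_inv_Gamma_bound {a : ℝ} (ha : 0 < a) :
    ∃ C, 0 ≤ C ∧ ∀ x ∈ Icc a (1 + a), 1 / Real.Gamma x ≤ C := by
  have hc : ContinuousOn (fun x => 1 / Real.Gamma x) (Icc a (1 + a)) :=
    continuousOn_const.div (continuousOn_Gamma_comp continuousOn_id fun x hx => ha.trans_le hx.1)
      fun x hx => (Real.Gamma_pos_of_pos (ha.trans_le hx.1)).ne'
  obtain ⟨C, hC⟩ := isCompact_Icc.exists_bound_of_continuousOn hc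
  refine ⟨C, (norm_nonneg _).trans (hC a ⟨le_rfl, by linarith⟩), fun x hx => ?_⟩
  exact (le_abs_self _).trans (hC x hx)

/-- The integrand of the double integral as a function of `(y, s)`, extended by `0` outside the
open triangle `0 < s < y < t`. Here `a` plays the role of `α t` and `v` that of `u'`. -/
noncomputable def exchangeKernel (t a : ℝ) (α v : ℝ → ℝ) : ℝ × ℝ → ℝ :=
  {p : ℝ × ℝ | 0 < p.2 ∧ p.2 < p.1 ∧ p.1 < t}.indicator fun p =>
    v p.2 / Real.Gamma (1 - α p.2) * ((t - p.1) ^ (a - 1) * (p.1 - p.2) ^ (-α p.2))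

lemma exchangeKernel_slice_y {t a y : ℝ} {α v : ℝ → ℝ} (hy : y ∈ Ioo 0 t) :
    (fun s => exchangeKernel t a α v (y, s)) = (Ioo 0 y).indicator fun s =>
      (t - y) ^ (a - 1) * (v s / (Real.Gamma (1 - α s) * (y - s) ^ α s)) := by
  funext s
  by_cases hs : s ∈ Ioo 0 y
  · rw [indicator_of_mem hs, exchangeKernel, indicator_of_mem (by exact ⟨hs.1, hs.2, hy.2⟩)]
    simp only
    rw [Real.rpow_neg (by linarith [hs.2])]
    simp only [div_eq_mul_inv, mul_inv]
    ring
  · rw [indicator_of_notMem hs, exchangeKernel, indicator_of_notMem]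
    exact fun h => hs ⟨h.1, h.2.1⟩

lemma exchangeKernel_slice_y_of_notMem {t a y : ℝ} {α v : ℝ → ℝ} (hy : y ∉ Ioo 0 t) :
    (fun s => exchangeKernel t a α v (y, s)) = 0 := by
  funext s
  exact indicator_of_notMem (fun h => hy ⟨h.1.trans h.2.1, h.2.2⟩) _

lemma exchangeKernel_slice_s {t a s : ℝ} {α v : ℝ → ℝ} (hs : s ∈ Ioo 0 t) :
    (fun y => exchangeKernel t a α v (y, s)) = fun y => v s / Real.Gamma (1 - α s) *
      (Ioo s t).indicator (fun y => (t - y) ^ (a - 1) * (y - s) ^ (-α s)) y := by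
  funext y
  by_cases hy : y ∈ Ioo s t
  · rw [indicator_of_mem hy, exchangeKernel, indicator_of_mem (by exact ⟨hs.1, hy.1, hy.2⟩)]
  · rw [indicator_of_notMem hy, exchangeKernel, indicator_of_notMem, mul_zero]
    exact fun h => hy ⟨h.2.1, h.2.2⟩

lemma exchangeKernel_slice_s_of_notMem {t a s : ℝ} {α v : ℝ → ℝ} (hs : s ∉ Ioo 0 t) :
    (fun y => exchangeKernel t a α v (y, s)) = 0 := by
  funext y
  exact indicator_of_notMem (fun h => hs ⟨h.1, h.2.1.trans h.2.2⟩) _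

lemma integral_indicator_beta {a b s t : ℝ} (ha : 0 < a) (hb : b < 1) (hst : s < t) :
    ∫ y, (Ioo s t).indicator (fun y => (t - y) ^ (a - 1) * (y - s) ^ (-b)) y
      = (t - s) ^ (a - b) * (Real.Gamma a * Real.Gamma (1 - b) / Real.Gamma (1 + a - b)) := by
  rw [integral_indicator measurableSet_Ioo, ← integral_Ioc_eq_integral_Ioo,
    ← intervalIntegral.integral_of_le hst.le, integral_beta_shifted ha hb hst]

lemma integral_exchangeKernel_y {t a s : ℝ} {α v : ℝ → ℝ} (ha : 0 < a) (hs : s ∈ Ioo 0 t)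
    (hα : α s < 1) :
    ∫ y, exchangeKernel t a α v (y, s) = Real.Gamma a *
      ((t - s) ^ (a - α s) / Real.Gamma (1 + a - α s) * v s) := by
  rw [exchangeKernel_slice_s hs, integral_const_mul, integral_indicator_beta ha hα hs.2]
  have := (Real.Gamma_pos_of_pos (sub_pos.2 hα)).ne'
  field_simp

/-- The kernel of `|v|` is the absolute value of the kernel of `v`, so the integral of the norm is
again given by `integral_exchangeKernel_y`. -/
lemma integral_norm_exchangeKernel_y {t a s : ℝ} {α v : ℝ → ℝ} (ha : 0 < a) (hs : s ∈ Ioo 0 t)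
    (hα : α s < 1) :
    ∫ y, ‖exchangeKernel t a α v (y, s)‖ = Real.Gamma a *
      ((t - s) ^ (a - α s) / Real.Gamma (1 + a - α s) * |v s|) := by
  rw [← integral_exchangeKernel_y (v := fun s => |v s|) ha hs hα]
  congr 1
  funext y
  by_cases hy : (y, s) ∈ {p : ℝ × ℝ | 0 < p.2 ∧ p.2 < p.1 ∧ p.1 < t}
  · have h1 : 0 ≤ (t - y) ^ (a - 1) := Real.rpow_nonneg (sub_pos.2 hy.2.2).le _
    have h2 : 0 ≤ (y - s) ^ (-α s) := Real.rpow_nonneg (sub_pos.2 hy.2.1).le _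
    have h3 := (Real.Gamma_pos_of_pos (sub_pos.2 hα)).le
    simp only [exchangeKernel, indicator_of_mem hy, Real.norm_eq_abs, abs_mul, abs_div,
      abs_of_nonneg h1, abs_of_nonneg h2, abs_of_nonneg h3]
  · simp only [exchangeKernel, indicator_of_notMem hy, norm_zero]

/-- Tonelli: after integration of the norm in `y`, a Beta integrand in `s` is a majorant. -/
lemma integrable_exchangeKernel {t a a₀ Q : ℝ} {α v : ℝ → ℝ} (ht : 0 < t) (ha : 0 < a)
    (ha₀ : 0 < a₀) (hα : ContinuousOn α (Ioo 0 t)) (hα0 : ∀ s ∈ Ioo 0 t, 0 < α s)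
    (hα1 : ∀ s ∈ Ioo 0 t, α s < 1) (hv : ContinuousOn v (Ioo 0 t))
    (hvb : ∀ s ∈ Ioo 0 t, |v s| ≤ Q * s ^ (a₀ - 1)) :
    Integrable (exchangeKernel t a α v) (volume.prod volume) := by
  have hU : IsOpen {p : ℝ × ℝ | 0 < p.2 ∧ p.2 < p.1 ∧ p.1 < t} :=
    (isOpen_lt continuous_const continuous_snd).inter
      ((isOpen_lt continuous_snd continuous_fst).inter (isOpen_lt continuous_fst continuous_const))
  have hmaps : MapsTo Prod.snd {p : ℝ × ℝ | 0 < p.2 ∧ p.2 < p.1 ∧ p.1 < t} (Ioo 0 t) :=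
    fun p hp => ⟨hp.1, hp.2.1.trans hp.2.2⟩
  have hα' := hα.comp continuousOn_snd hmaps
  have hv' := hv.comp continuousOn_snd hmaps
  have hmeas : AEStronglyMeasurable (exchangeKernel t a α v) (volume.prod volume) := by
    rw [exchangeKernel, aestronglyMeasurable_indicator_iff hU.measurableSet]
    refine ContinuousOn.aestronglyMeasurable ?_ hU.measurableSet
    refine (hv'.div (continuousOn_Gamma_comp (continuousOn_const.sub hα') fun p hp => ?_)
      fun p hp => ?_).mul (((continuousOn_const.sub continuousOn_fst).rpow continuousOn_const
        fun p hp => ?_).mul ((continuousOn_fst.sub continuousOn_snd).rpow hα'.neg fun p hp => ?_))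
    · exact sub_pos.2 (hα1 _ (hmaps hp))
    · exact (Real.Gamma_pos_of_pos (sub_pos.2 (hα1 _ (hmaps hp)))).ne'
    · exact Or.inl (sub_pos.2 hp.2.2).ne'
    · exact Or.inl (sub_pos.2 hp.2.1).ne'
  rw [integrable_prod_iff' hmeas]
  constructor
  · refine Filter.Eventually.of_forall fun s => ?_
    by_cases hs : s ∈ Ioo 0 t
    · rw [exchangeKernel_slice_s hs]
      exact ((integrable_indicator_iff measurableSet_Ioo).2
        (integrableOn_beta_shifted ha (hα1 s hs) hs.2)).const_mul _
    · rw [exchangeKernel_slice_s_of_notMem hs]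
      exact integrable_zero _ _ _
  · obtain ⟨C, hC0, hC⟩ := exists_inv_Gamma_bound ha
    have hdom : Integrable ((Ioo 0 t).indicator fun s =>
        (Real.Gamma a * max 1 t * C * Q) * (s ^ (a₀ - 1) * (t - s) ^ (a - 1))) :=
      (integrable_indicator_iff measurableSet_Ioo).2
        ((integrableOn_beta_scaled ha₀ ha ht).const_mul _)
    refine hdom.mono' hmeas.norm.prod_swap.integral_prod_right' ?_
    refine Filter.Eventually.of_forall fun s => ?_
    rw [Real.norm_of_nonneg (integral_nonneg fun _ => norm_nonneg _)]
    by_cases hs : s ∈ Ioo 0 t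
    · rw [indicator_of_mem hs, integral_norm_exchangeKernel_y ha hs (hα1 s hs)]
      have h0 := hα0 s hs
      have h1 := hα1 s hs
      have hts : 0 < t - s := sub_pos.2 hs.2
      have hpow : (t - s) ^ (a - α s) ≤ max 1 t * (t - s) ^ (a - 1) := by
        rw [show a - α s = (1 - α s) + (a - 1) by ring, Real.rpow_add hts]
        refine mul_le_mul_of_nonneg_right ?_ (Real.rpow_nonneg hts.le _)
        calc (t - s) ^ (1 - α s) ≤ (max 1 t) ^ (1 - α s) :=
              Real.rpow_le_rpow hts.le (by linarith [le_max_right 1 t, hs.1]) (by linarith)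
          _ ≤ (max 1 t) ^ (1 : ℝ) :=
              Real.rpow_le_rpow_of_exponent_le (le_max_left _ _) (by linarith)
          _ = max 1 t := Real.rpow_one _
      have hG := hC (1 + a - α s) ⟨by linarith, by linarith⟩
      have hGp := Real.Gamma_pos_of_pos (show 0 < 1 + a - α s by linarith)
      have hGa := Real.Gamma_pos_of_pos ha
      have hb := hvb s hs
      calc Real.Gamma a * ((t - s) ^ (a - α s) / Real.Gamma (1 + a - α s) * |v s|)
          = Real.Gamma a * ((t - s) ^ (a - α s) * (1 / Real.Gamma (1 + a - α s)) * |v s|) := by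
            ring
        _ ≤ Real.Gamma a * ((max 1 t * (t - s) ^ (a - 1)) * C * (Q * s ^ (a₀ - 1))) := by
            gcongr
        _ = _ := by ring
    · rw [indicator_of_notMem hs]
      have := exchangeKernel_slice_s_of_notMem (a := a) (α := α) (v := v) hs
      simp [fun y => congrFun this y]

/-- Exchange-of-integration identity underlying the approximate inversion: for
`u ∈ C[0,T] ∩ C¹(0,T]` with `|u'(t)| ≤ Q t^{α(0)-1}`, applying
`₀Ĩ_t^{α(t)} g := (1/Γ(α(t))) ∫₀^t g(y)(t-y)^{α(t)-1} dy` to `₀D_t^{α(t)} u` yields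
`∫₀^t K(t,s) u'(s) ds` with `K(t,s) = (t-s)^{α(t)-α(s)}/Γ(1+α(t)-α(s))`. -/
theorem exchange_of_integration
    (T αstar L Q : ℝ) (α : ℝ → ℝ) (f : ℝ → ℝ → ℝ) (u : ℝ → ℝ)
    (hA : AssumptionA T α f αstar L)
    (hu_cont : ContinuousOn u (Set.Icc 0 T))
    (hu_diff : ∀ t ∈ Set.Ioc 0 T, DifferentiableAt ℝ u t)
    (hu'_cont : ContinuousOn (deriv u) (Set.Ioc 0 T))
    (hQ : 0 < Q)
    (hu' : ∀ t ∈ Set.Ioc 0 T, |deriv u t| ≤ Q * t ^ (α 0 - 1)) :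
    ∀ t ∈ Set.Ioc 0 T,
      (1 / Real.Gamma (α t)) *
          ∫ y in (0:ℝ)..t, (t - y) ^ (α t - 1) *
            ∫ s in (0:ℝ)..y, deriv u s / (Real.Gamma (1 - α s) * (y - s) ^ α s)
        = ∫ s in (0:ℝ)..t,
            (t - s) ^ (α t - α s) / Real.Gamma (1 + α t - α s) * deriv u s := by
  intro t ht
  have hT := hA.hT
  have hsub : Ioo 0 t ⊆ Ioc 0 T := fun s hs => ⟨hs.1, hs.2.le.trans ht.2⟩
  have hat : 0 < α t := hA.hαstar_pos.trans_le (hA.hα_lb t ht)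
  have hαc : ContinuousOn α (Icc 0 T) := hA.hα_smooth.continuousOn
  -- The lower bound on `α` extends to `0` by continuity, so `s ^ (α 0 - 1)` is integrable at `0`.
  have ha₀ : 0 < α 0 := by
    refine hA.hαstar_pos.trans_le ?_
    have h0 : Filter.Tendsto α (nhdsWithin 0 (Ioc 0 T)) (nhds (α 0)) :=
      (hαc 0 ⟨le_rfl, hT.le⟩).mono_left (nhdsWithin_mono _ Ioc_subset_Icc_self)
    have : (nhdsWithin (0 : ℝ) (Ioc 0 T)).NeBot := by
      rw [nhdsWithin_Ioc_eq_nhdsGT hT]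
      infer_instance
    exact ge_of_tendsto h0 (eventually_nhdsWithin_of_forall hA.hα_lb)
  have hint := integrable_exchangeKernel (a := α t) (Q := Q) ht.1 hat ha₀
    (hαc.mono (hsub.trans Ioc_subset_Icc_self))
    (fun s hs => hA.hαstar_pos.trans_le (hA.hα_lb s (hsub hs)))
    (fun s hs => hA.hα_ub s (hsub hs)) (hu'_cont.mono hsub) (fun s hs => hu' s (hsub hs))
  have hswap := integral_integral_swap
    (f := fun y s => exchangeKernel t (α t) α (deriv u) (y, s)) hint
  have hL : (∫ y, ∫ s, exchangeKernel t (α t) α (deriv u) (y, s)) =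
      ∫ y in (0:ℝ)..t, (t - y) ^ (α t - 1) *
        ∫ s in (0:ℝ)..y, deriv u s / (Real.Gamma (1 - α s) * (y - s) ^ α s) := by
    rw [intervalIntegral.integral_of_le ht.1.le, integral_Ioc_eq_integral_Ioo,
      ← integral_indicator measurableSet_Ioo]
    congr 1
    funext y
    by_cases hy : y ∈ Ioo 0 t
    · rw [indicator_of_mem hy, exchangeKernel_slice_y hy, integral_indicator measurableSet_Ioo,
        integral_const_mul, intervalIntegral.integral_of_le hy.1.le, integral_Ioc_eq_integral_Ioo]
    · rw [indicator_of_notMem hy, exchangeKernel_slice_y_of_notMem hy]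
      simp
  have hR : (∫ s, ∫ y, exchangeKernel t (α t) α (deriv u) (y, s)) =
      Real.Gamma (α t) * ∫ s in (0:ℝ)..t,
        (t - s) ^ (α t - α s) / Real.Gamma (1 + α t - α s) * deriv u s := by
    rw [intervalIntegral.integral_of_le ht.1.le, integral_Ioc_eq_integral_Ioo,
      ← integral_const_mul, ← integral_indicator measurableSet_Ioo]
    congr 1
    funext s
    by_cases hs : s ∈ Ioo 0 t
    · rw [indicator_of_mem hs, integral_exchangeKernel_y hat hs (hA.hα_ub s (hsub hs))]
    · rw [indicator_of_notMem hs, exchangeKernel_slice_s_of_notMem hs]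
      simp
  have hΓ := (Real.Gamma_pos_of_pos hat).ne'
  rw [← hL, hswap, hR]
  field_simp
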